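/- Let 𝔾₁ = (X₁, A₁, λ₁) and 𝔾₂ = (X₂, A₂, λ₂) be synchronous games. Then the product game 𝔾₁ × 𝔾₂ has a perfect C*-strategy if and only if both 𝔾₁ and 𝔾₂ have perfect C*-strategies. -/

import Mathlib

/-- The rule function of the product of two (synchronous) games. -/
def prodRule {X₁ X₂ A₁ A₂ : Type}
    (lam₁ : X₁ → X₁ → A₁ → A₁ → Bool) (lam₂ : X₂ → X₂ → A₂ → A₂ → Bool)
    (x y : X₁ × X₂) (a b : A₁ × A₂) : Bool :=
  lam₁ x.1 y.1 a.1 b.1 && lam₂ x.2 y.2 a.2 b.2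

/-- A synchronous game with rule function `lam` has a perfect C*-strategy if there is a
nonzero unital C*-algebra with self-adjoint idempotents `e x a` summing to `1` over `a`
for each `x`, and `e x a * e y b = 0` whenever `lam x y a b = 0`. -/
def PerfectCStarStrategy {X A : Type} [Fintype A] (lam : X → X → A → A → Bool) : Prop :=
  ∃ (𝒜 : Type) (_ : CStarAlgebra 𝒜) (_ : Nontrivial 𝒜) (e : X → A → 𝒜),
    (∀ x a, star (e x a) = e x a) ∧
    (∀ x a, e x a * e x a = e x a) ∧
    (∀ x, ∑ a, e x a = 1) ∧
    (∀ x y a b, lam x y a b = false → e x a * e y b = 0)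

/-!
A perfect strategy for the product game yields one for each factor: fix a question in the other game
and sum over its answers. These sums are again projections, because projections in a C*-algebra that
sum to `1` are pairwise orthogonal.

Conversely, the Hermitian part of a norming functional of `1` is a state, so by the GNS construction
a nonzero C*-algebra acts on a nonzero Hilbert space. If the two games are won in algebras acting on
`H` and `K`, the amplifications `S ⊗ 1` and `1 ⊗ T` to `H ⊗ K` carry both strategies into a common
C*-algebra where they commute, and the products `e₁ x₁ a₁ * e₂ x₂ a₂` win the product game.
-/

open scoped InnerProductSpace TensorProduct
open UniformSpace (Completion)

universe u v

section Representations

variable {𝕜 E F : Type*} [RCLike 𝕜] [NormedAddCommGroup E] [InnerProductSpace 𝕜 E]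
  [NormedAddCommGroup F] [InnerProductSpace 𝕜 F]

variable (𝕜 E) in
/-- Extension of bounded operators to the completion, as an algebra homomorphism. -/
noncomputable def completionAlgHom :
    (E →L[𝕜] E) →ₐ[𝕜] (Completion E →L[𝕜] Completion E) :=
  have ext_coe {S T : Completion E →L[𝕜] Completion E} (h : ∀ x : E, S x = T x) : S = T :=
    DFunLike.coe_injective (Completion.ext S.continuous T.continuous h)
  AlgHom.ofLinearMap
    { toFun := ContinuousLinearMap.completion
      map_add' := fun S T ↦ ext_coe fun x ↦ by simp [Completion.coe_add]
      map_smul' := fun c S ↦ ext_coe fun x ↦ by simp [Completion.coe_smul] }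
    (ext_coe fun x ↦ by simp)
    (fun S T ↦ ext_coe fun x ↦ by simp)

lemma completionAlgHom_apply_coe (S : E →L[𝕜] E) (x : E) :
    completionAlgHom 𝕜 E S x = (S x : Completion E) :=
  S.completion_apply_coe x

lemma star_completionAlgHom {S T : E →L[𝕜] E} (hST : ∀ x y, ⟪S x, y⟫_𝕜 = ⟪x, T y⟫_𝕜) :
    star (completionAlgHom 𝕜 E S) = completionAlgHom 𝕜 E T := by
  rw [ContinuousLinearMap.star_eq_adjoint, eq_comm, ContinuousLinearMap.eq_adjoint_iff]
  intro x y
  induction x, y using Completion.induction_on₂ with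
  | hp => apply isClosed_eq <;> fun_prop
  | ih x y =>
    rw [completionAlgHom_apply_coe, completionAlgHom_apply_coe, Completion.inner_coe,
      Completion.inner_coe, ← inner_conj_symm, ← hST, inner_conj_symm]

lemma inner_mapL_left [CompleteSpace E] [CompleteSpace F] (S : E →L[𝕜] E) (T : F →L[𝕜] F)
    (x y : E ⊗[𝕜] F) :
    ⟪TensorProduct.mapL S T x, y⟫_𝕜 = ⟪x, TensorProduct.mapL (star S) (star T) y⟫_𝕜 := by
  induction x with
  | zero => simp
  | add x x' hx hx' => rw [map_add, inner_add_left, inner_add_left, hx, hx']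
  | tmul a b =>
    induction y with
    | zero => simp
    | add y y' hy hy' => rw [map_add, inner_add_right, inner_add_right, hy, hy']
    | tmul c d =>
      simp only [TensorProduct.mapL_tmul, TensorProduct.inner_tmul,
        ContinuousLinearMap.star_eq_adjoint, ContinuousLinearMap.adjoint_inner_right]

lemma star_completionAlgHom_mapL [CompleteSpace E] [CompleteSpace F] (S : E →L[𝕜] E)
    (T : F →L[𝕜] F) :
    star (completionAlgHom 𝕜 (E ⊗[𝕜] F) (TensorProduct.mapL S T)) =
      completionAlgHom 𝕜 (E ⊗[𝕜] F) (TensorProduct.mapL (star S) (star T)) :=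
  star_completionAlgHom (inner_mapL_left S T)

variable (𝕜 E F) in
/-- The amplification `S ↦ S ⊗ 1` of operators on `E` to the algebraic tensor product. -/
noncomputable def rTensorAlgHom : (E →L[𝕜] E) →ₐ[𝕜] (E ⊗[𝕜] F →L[𝕜] E ⊗[𝕜] F) :=
  AlgHom.ofLinearMap
    { toFun := fun S ↦ TensorProduct.mapL S 1
      map_add' := fun S T ↦ TensorProduct.mapL_add_left S T 1
      map_smul' := fun c S ↦ TensorProduct.mapL_smul_left c S 1 }
    TensorProduct.mapL_id_id
    (fun S T ↦ by simp [← TensorProduct.mapL_mul])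

variable (𝕜 E F) in
/-- The amplification `T ↦ 1 ⊗ T` of operators on `F` to the algebraic tensor product. -/
noncomputable def lTensorAlgHom : (F →L[𝕜] F) →ₐ[𝕜] (E ⊗[𝕜] F →L[𝕜] E ⊗[𝕜] F) :=
  AlgHom.ofLinearMap
    { toFun := fun T ↦ TensorProduct.mapL 1 T
      map_add' := fun S T ↦ TensorProduct.mapL_add_right 1 S T
      map_smul' := fun c T ↦ TensorProduct.mapL_smul_right c 1 T }
    TensorProduct.mapL_id_id
    (fun S T ↦ by simp [← TensorProduct.mapL_mul])

lemma commute_rTensorAlgHom_lTensorAlgHom (S : E →L[𝕜] E) (T : F →L[𝕜] F) :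
    Commute (rTensorAlgHom 𝕜 E F S) (lTensorAlgHom 𝕜 E F T) := by
  change TensorProduct.mapL S 1 * TensorProduct.mapL 1 T =
    TensorProduct.mapL 1 T * TensorProduct.mapL S 1
  simp only [← TensorProduct.mapL_mul, one_mul, mul_one]

variable [CompleteSpace E] [CompleteSpace F]

variable (𝕜 E F) in
/-- The amplification `S ↦ S ⊗ 1` of operators on `E` to the Hilbert space tensor product, which is
the completion of the algebraic one. -/
noncomputable def leftAmplification :
    (E →L[𝕜] E) →⋆ₐ[𝕜] (Completion (E ⊗[𝕜] F) →L[𝕜] Completion (E ⊗[𝕜] F)) where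
  toAlgHom := (completionAlgHom 𝕜 (E ⊗[𝕜] F)).comp (rTensorAlgHom 𝕜 E F)
  map_star' S := by
    have h := (star_completionAlgHom_mapL S (1 : F →L[𝕜] F)).symm
    rw [star_one] at h
    exact h

variable (𝕜 E F) in
/-- The amplification `T ↦ 1 ⊗ T` of operators on `F` to the Hilbert space tensor product, which is
the completion of the algebraic one. -/
noncomputable def rightAmplification :
    (F →L[𝕜] F) →⋆ₐ[𝕜] (Completion (E ⊗[𝕜] F) →L[𝕜] Completion (E ⊗[𝕜] F)) where
  toAlgHom := (completionAlgHom 𝕜 (E ⊗[𝕜] F)).comp (lTensorAlgHom 𝕜 E F)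
  map_star' T := by
    have h := (star_completionAlgHom_mapL (1 : E →L[𝕜] E) T).symm
    rw [star_one] at h
    exact h

lemma commute_leftAmplification_rightAmplification (S : E →L[𝕜] E) (T : F →L[𝕜] F) :
    Commute (leftAmplification 𝕜 E F S) (rightAmplification 𝕜 E F T) :=
  (commute_rTensorAlgHom_lTensorAlgHom S T).map (completionAlgHom 𝕜 (E ⊗[𝕜] F))

variable {A : Type*} [CStarAlgebra A]

lemma re_apply_nonneg_of_map_one [PartialOrder A] [StarOrderedRing A] {g : StrongDual ℂ A}
    (hg : ‖g‖ ≤ 1) (hg1 : g 1 = 1) {a : A} (ha : 0 ≤ a) : 0 ≤ (g a).re := by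
  have : Nontrivial A := nontrivial_of_ne 1 0 fun h ↦ by simp [h] at hg1
  have hle : a ≤ algebraMap ℝ A ‖a‖ := ha.isSelfAdjoint.le_algebraMap_norm_self
  have hnorm : ‖algebraMap ℝ A ‖a‖ - a‖ ≤ ‖a‖ := by
    simpa using CStarAlgebra.norm_le_norm_of_nonneg_of_le (sub_nonneg.mpr hle) (sub_le_self _ ha)
  have hmap : g (algebraMap ℝ A ‖a‖) = ‖a‖ := by
    rw [Algebra.algebraMap_eq_smul_one, ← Complex.coe_smul, map_smul, hg1, smul_eq_mul, mul_one]
  have hre : ‖a‖ - (g a).re ≤ ‖a‖ :=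
    calc ‖a‖ - (g a).re = (g (algebraMap ℝ A ‖a‖ - a)).re := by
          rw [map_sub, hmap, Complex.sub_re, Complex.ofReal_re]
      _ ≤ ‖g (algebraMap ℝ A ‖a‖ - a)‖ := Complex.re_le_norm _
      _ ≤ ‖algebraMap ℝ A ‖a‖ - a‖ := g.le_of_opNorm_le_of_le hg le_rfl |>.trans_eq (one_mul _)
      _ ≤ ‖a‖ := hnorm
  linarith

open scoped ComplexOrder in
lemma exists_state (A : Type*) [CStarAlgebra A] [Nontrivial A] [PartialOrder A]
    [StarOrderedRing A] : ∃ f : A →ₚ[ℂ] ℂ, f 1 = 1 := by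
  obtain ⟨g, hg, hg1⟩ := exists_dual_vector'' ℂ (1 : A)
  replace hg1 : g 1 = 1 := by simpa using hg1
  -- The Hermitian part `a ↦ (g a + conj (g (star a))) / 2` of `g` is real on self-adjoint elements
  -- by construction, which spares a proof that `g` is already Hermitian.
  let f : A →ₗ[ℂ] ℂ :=
    (realPart (WithConv.toConv (g : A →ₗ[ℂ] ℂ)) : WithConv (A →ₗ[ℂ] ℂ)).ofConv
  have hf {a : A} (ha : IsSelfAdjoint a) : f a = (g a).re := by
    simp only [f, realPart_apply_coe, smul_add, WithConv.ofConv_add, WithConv.ofConv_smul,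
      LinearMap.add_apply, LinearMap.smul_apply, ContinuousLinearMap.coe_coe, Complex.real_smul,
      Complex.ofReal_inv, Complex.ofReal_ofNat, LinearMap.intrinsicStar_apply, ha.star_eq,
      RCLike.star_def, Complex.re_eq_add_conj]
    ring
  refine ⟨.mk₀ f fun a ha ↦ ?_, ?_⟩
  · rw [hf ha.isSelfAdjoint]
    exact_mod_cast re_apply_nonneg_of_map_one hg hg1 ha
  · change f 1 = 1
    rw [hf (.one A), hg1, Complex.one_re, Complex.ofReal_one]

theorem exists_nontrivial_representation (A : Type u) [CStarAlgebra A] [Nontrivial A] :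
    ∃ (H : Type u) (_ : NormedAddCommGroup H) (_ : InnerProductSpace ℂ H) (_ : CompleteSpace H),
      Nontrivial H ∧ Nonempty (A →⋆ₐ[ℂ] (H →L[ℂ] H)) := by
  let _ : PartialOrder A := CStarAlgebra.spectralOrder A
  have : StarOrderedRing A := CStarAlgebra.spectralOrderedRing A
  obtain ⟨f, hf⟩ := exists_state A
  refine ⟨f.GNS, inferInstance, inferInstance, inferInstance, ?_, ⟨f.gnsStarAlgHom⟩⟩
  have hnorm : ‖(f.toPreGNS 1 : f.GNS)‖ = 1 := by
    simp [Completion.norm_coe, PositiveLinearMap.preGNS_norm_def, hf]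
  exact nontrivial_of_ne _ 0 (norm_ne_zero_iff.mp (hnorm ▸ one_ne_zero))

theorem exists_commuting_starAlgHoms (A : Type u) (B : Type v) [CStarAlgebra A] [Nontrivial A]
    [CStarAlgebra B] [Nontrivial B] :
    ∃ (C : Type max u v) (_ : CStarAlgebra C) (_ : Nontrivial C)
      (φ : A →⋆ₐ[ℂ] C) (ψ : B →⋆ₐ[ℂ] C), ∀ a b, Commute (φ a) (ψ b) := by
  obtain ⟨H, _, _, _, _, ⟨π⟩⟩ := exists_nontrivial_representation A
  obtain ⟨K, _, _, _, _, ⟨ρ⟩⟩ := exists_nontrivial_representation B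
  have : Nontrivial (Completion (H ⊗[ℂ] K)) := Completion.coe_injective _ |>.nontrivial
  exact ⟨Completion (H ⊗[ℂ] K) →L[ℂ] Completion (H ⊗[ℂ] K), { }, inferInstance,
    (leftAmplification ℂ H K).comp π, (rightAmplification ℂ H K).comp ρ,
    fun a b ↦ commute_leftAmplification_rightAmplification (π a) (ρ b)⟩

lemma orthogonalIdempotents_of_sum_eq_one {ι : Type*} [Fintype ι] {p : ι → A}
    (hp : ∀ i, IsStarProjection (p i)) (hsum : ∑ i, p i = 1) : OrthogonalIdempotents p where
  idem i := (hp i).isIdempotentElem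
  ortho i j hij := by
    classical
    let _ : PartialOrder A := CStarAlgebra.spectralOrder A
    have : StarOrderedRing A := CStarAlgebra.spectralOrderedRing A
    have hle : p i ≤ 1 - p j := by
      rw [← hsum, ← Finset.sum_erase_eq_sub (Finset.mem_univ j)]
      exact Finset.single_le_sum (fun k _ ↦ (hp k).nonneg) (by simpa using hij)
    have hmul : p i * (1 - p j) = p i := ((hp i).le_iff_mul_eq_left (hp j).one_sub).mp hle
    simpa [mul_sub] using hmul

end Representations

/-- The relations of a perfect strategy for the game with rule function `lam`, imposed on a family
`e` in a star ring `R`: the `e x a` are projections, they sum to `1` over the answers `a`, and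
products forbidden by `lam` vanish. This separates the relations from the existence of the
C*-algebra, so that strategies can be transported between algebras. -/
structure IsPerfectStrategy {X A R : Type*} [Fintype A] [Semiring R] [Star R]
    (lam : X → X → A → A → Bool) (e : X → A → R) : Prop where
  isStarProjection : ∀ x a, IsStarProjection (e x a)
  sum_eq_one : ∀ x, ∑ a, e x a = 1
  mul_eq_zero : ∀ x y a b, lam x y a b = false → e x a * e y b = 0

lemma perfectCStarStrategy_iff {X A : Type} [Fintype A] {lam : X → X → A → A → Bool} :
    PerfectCStarStrategy lam ↔ ∃ (𝒜 : Type) (_ : CStarAlgebra 𝒜) (_ : Nontrivial 𝒜)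
      (e : X → A → 𝒜), IsPerfectStrategy lam e := by
  constructor
  · rintro ⟨𝒜, _, _, e, hstar, hidem, hsum, hzero⟩
    exact ⟨𝒜, _, ‹_›, e, fun x a ↦ ⟨hidem x a, hstar x a⟩, hsum, hzero⟩
  · rintro ⟨𝒜, _, _, e, he⟩
    exact ⟨𝒜, _, ‹_›, e, fun x a ↦ (he.isStarProjection x a).isSelfAdjoint,
      fun x a ↦ (he.isStarProjection x a).isIdempotentElem, he.sum_eq_one, he.mul_eq_zero⟩

namespace IsPerfectStrategy

lemma map {X A R S : Type*} [Fintype A] [Semiring R] [Star R] [Semiring S] [Star S]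
    {lam : X → X → A → A → Bool} {e : X → A → R} (he : IsPerfectStrategy lam e)
    {Φ : Type*} [FunLike Φ R S] [RingHomClass Φ R S] [StarHomClass Φ R S] (φ : Φ) :
    IsPerfectStrategy lam fun x a ↦ φ (e x a) where
  isStarProjection x a := (he.isStarProjection x a).map φ
  sum_eq_one x := by rw [← map_sum, he.sum_eq_one, map_one]
  mul_eq_zero x y a b h := by rw [← map_mul, he.mul_eq_zero x y a b h, map_zero]

lemma prod {X₁ A₁ X₂ A₂ : Type} {R : Type*} [Fintype A₁] [Fintype A₂] [Semiring R] [StarRing R]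
    {lam₁ : X₁ → X₁ → A₁ → A₁ → Bool} {lam₂ : X₂ → X₂ → A₂ → A₂ → Bool}
    {e₁ : X₁ → A₁ → R} {e₂ : X₂ → A₂ → R} (h₁ : IsPerfectStrategy lam₁ e₁)
    (h₂ : IsPerfectStrategy lam₂ e₂) (hcomm : ∀ x₁ a₁ x₂ a₂, Commute (e₁ x₁ a₁) (e₂ x₂ a₂)) :
    IsPerfectStrategy (prodRule lam₁ lam₂) fun x a ↦ e₁ x.1 a.1 * e₂ x.2 a.2 where
  isStarProjection x a :=
    (h₁.isStarProjection _ _).mul (h₂.isStarProjection _ _) (hcomm _ _ _ _)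
  sum_eq_one x := by
    rw [Fintype.sum_prod_type, ← Finset.sum_mul_sum, h₁.sum_eq_one, h₂.sum_eq_one, one_mul]
  mul_eq_zero x y a b h := by
    rw [(hcomm y.1 b.1 x.2 a.2).symm.mul_mul_mul_comm]
    rcases Bool.and_eq_false_iff.mp h with h | h
    · rw [h₁.mul_eq_zero _ _ _ _ h, zero_mul]
    · rw [h₂.mul_eq_zero _ _ _ _ h, mul_zero]

lemma coarsen {X A Y B R : Type*} [Fintype A] [Fintype B] [DecidableEq B] [CStarAlgebra R]
    {lam : X → X → A → A → Bool} {mu : Y → Y → B → B → Bool} {e : X → A → R}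
    (he : IsPerfectStrategy lam e) (q : Y → X) (r : A → B)
    (hqr : ∀ x y a b, mu x y (r a) (r b) = false → lam (q x) (q y) a b = false) :
    IsPerfectStrategy mu fun y b ↦ ∑ a with r a = b, e (q y) a where
  isStarProjection y b :=
    ⟨(orthogonalIdempotents_of_sum_eq_one (he.isStarProjection (q y))
      (he.sum_eq_one (q y))).isIdempotentElem_sum,
      isSelfAdjoint_sum _ fun a _ ↦ (he.isStarProjection (q y) a).isSelfAdjoint⟩
  sum_eq_one y := by rw [Finset.sum_fiberwise, he.sum_eq_one]
  mul_eq_zero x y a b h := by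
    rw [Finset.sum_mul_sum]
    refine Finset.sum_eq_zero fun c hc ↦ Finset.sum_eq_zero fun d hd ↦
      he.mul_eq_zero _ _ _ _ (hqr x y c d ?_)
    rwa [(Finset.mem_filter.mp hc).2, (Finset.mem_filter.mp hd).2]

end IsPerfectStrategy

namespace PerfectCStarStrategy

lemma coarsen {X A Y B : Type} [Fintype A] [Fintype B]
    {lam : X → X → A → A → Bool} {mu : Y → Y → B → B → Bool} (h : PerfectCStarStrategy lam)
    (q : Y → X) (r : A → B)
    (hqr : ∀ x y a b, mu x y (r a) (r b) = false → lam (q x) (q y) a b = false) :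
    PerfectCStarStrategy mu := by
  classical
  obtain ⟨𝒜, _, _, e, he⟩ := perfectCStarStrategy_iff.mp h
  exact perfectCStarStrategy_iff.mpr ⟨𝒜, _, ‹_›, _, he.coarsen q r hqr⟩

lemma prod {X₁ A₁ X₂ A₂ : Type} [Fintype A₁] [Fintype A₂]
    {lam₁ : X₁ → X₁ → A₁ → A₁ → Bool} {lam₂ : X₂ → X₂ → A₂ → A₂ → Bool}
    (h₁ : PerfectCStarStrategy lam₁) (h₂ : PerfectCStarStrategy lam₂) :
    PerfectCStarStrategy (prodRule lam₁ lam₂) := by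
  obtain ⟨𝒜, _, _, e₁, he₁⟩ := perfectCStarStrategy_iff.mp h₁
  obtain ⟨ℬ, _, _, e₂, he₂⟩ := perfectCStarStrategy_iff.mp h₂
  obtain ⟨𝒞, _, _, φ, ψ, hcomm⟩ := exists_commuting_starAlgHoms 𝒜 ℬ
  exact perfectCStarStrategy_iff.mpr
    ⟨𝒞, _, ‹_›, _, (he₁.map φ).prod (he₂.map ψ) fun _ _ _ _ ↦ hcomm _ _⟩

end PerfectCStarStrategy

theorem prod_perfectCStarStrategy_iff_general
    {X₁ A₁ X₂ A₂ : Type} [Nonempty X₁] [Fintype A₁] [Nonempty X₂] [Fintype A₂]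
    (lam₁ : X₁ → X₁ → A₁ → A₁ → Bool) (lam₂ : X₂ → X₂ → A₂ → A₂ → Bool) :
    PerfectCStarStrategy (prodRule lam₁ lam₂) ↔
      PerfectCStarStrategy lam₁ ∧ PerfectCStarStrategy lam₂ := by
  obtain ⟨x₁⟩ := ‹Nonempty X₁›
  obtain ⟨x₂⟩ := ‹Nonempty X₂›
  refine ⟨fun h ↦ ⟨?_, ?_⟩, fun ⟨h₁, h₂⟩ ↦ h₁.prod h₂⟩
  · exact h.coarsen (fun x ↦ (x, x₂)) Prod.fst fun x y a b hlam ↦ by simp [prodRule, hlam]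
  · exact h.coarsen (fun x ↦ (x₁, x)) Prod.snd fun x y a b hlam ↦ by simp [prodRule, hlam]

/-- The product of two synchronous games has a perfect C*-strategy if and only if
both factor games do. -/
theorem prod_perfectCStarStrategy_iff
    {X₁ A₁ X₂ A₂ : Type} [Fintype X₁] [Nonempty X₁] [Fintype A₁] [Nonempty A₁]
    [Fintype X₂] [Nonempty X₂] [Fintype A₂] [Nonempty A₂]
    (lam₁ : X₁ → X₁ → A₁ → A₁ → Bool) (lam₂ : X₂ → X₂ → A₂ → A₂ → Bool)
    (hsync₁ : ∀ x a b, a ≠ b → lam₁ x x a b = false)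
    (hsync₂ : ∀ x a b, a ≠ b → lam₂ x x a b = false) :
    PerfectCStarStrategy (prodRule lam₁ lam₂) ↔
      PerfectCStarStrategy lam₁ ∧ PerfectCStarStrategy lam₂ := by
  exact prod_perfectCStarStrategy_iff_general lam₁ lam₂
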